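/- For all real 3×4 matrices P_i and P_j, the matrix S := P_jᵀ 𝓕(P_i, P_j) P_i is skew-symmetric; that is, P_jᵀ 𝓕(P_i, P_j) P_i + P_iᵀ 𝓕(P_i, P_j)ᵀ P_j = 0. -/

import Mathlib

open Matrix

/-- The fundamental matrix of a camera pair `(P, Q)` of `3 × 4` matrices:
its `(h,k)` entry is `(-1)^(h+k)` times the determinant of the `4 × 4` matrix
obtained by stacking the rows of `P` other than row `k` (in their original order)
on top of the rows of `Q` other than row `h` (in their original order). -/
def fund {K : Type*} [CommRing K] (P Q : Matrix (Fin 3) (Fin 4) K) :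
    Matrix (Fin 3) (Fin 3) K :=
  Matrix.of fun h k =>
    (-1 : K) ^ ((h : ℕ) + (k : ℕ)) *
      (Matrix.of fun r c : Fin 4 =>
          if hr : (r : ℕ) < 2 then P (k.succAbove ⟨(r : ℕ), hr⟩) c
          else Q (h.succAbove ⟨(r : ℕ) - 2, by have := r.isLt; omega⟩) c).det

/-!
Let `e ∈ K³` be the epipole, the image under `Q` of the center of `P`. Laplace expansion of a
`5 × 5` determinant with linearly dependent columns gives `𝓕(P, Q) P = -[e]ₓ Q`, where `[e]ₓ` is
the skew-symmetric matrix of `v ↦ e × v`. Hence `Qᵀ 𝓕(P, Q) P = -Qᵀ [e]ₓ Q` is skew-symmetric.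
-/

variable {K : Type*} [CommRing K]

theorem det_cons_mulVec_eq_zero {n : ℕ} (A : Matrix (Fin (n + 1)) (Fin n) K) (x : Fin n → K) :
    (of fun i => (Fin.cons ((A *ᵥ x) i) (A i) : Fin (n + 1) → K)).det = 0 := by
  -- Adding `x j` times each column `j` of `A` to the zero column of `B` keeps `det B = 0`.
  let B : Matrix (Fin (n + 1)) (Fin (n + 1)) K := of fun i => Fin.cons 0 (A i)
  have h := det_updateCol_sum B 0 (Fin.cons 0 x)
  rw [Fin.cons_zero, zero_smul] at h
  convert h using 2
  ext i j
  cases j using Fin.cases <;> simp [B, mulVec, dotProduct, Fin.sum_univ_succ, mul_comm]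

theorem sum_mulVec_mul_det_submatrix_succAbove {n : ℕ} (A : Matrix (Fin (n + 1)) (Fin n) K)
    (x : Fin n → K) :
    ∑ i : Fin (n + 1), (-1) ^ (i : ℕ) * (A *ᵥ x) i * (A.submatrix i.succAbove id).det = 0 := by
  rw [← det_cons_mulVec_eq_zero A x, det_succ_column_zero]
  rfl

theorem sum_mulVec_mul_det_erase_row (P : Matrix (Fin 3) (Fin 4) K) (a b x : Fin 4 → K) :
    ∑ k : Fin 3, (-1) ^ (k : ℕ) * (P *ᵥ x) k *
        (of ![P (k.succAbove 0), P (k.succAbove 1), a, b]).det =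
      a ⬝ᵥ x * (of ![P 0, P 1, P 2, b]).det - b ⬝ᵥ x * (of ![P 0, P 1, P 2, a]).det := by
  let A : Matrix (Fin 5) (Fin 4) K := of ![P 0, P 1, P 2, a, b]
  have erase_of_lt (k : Fin 3) : A.submatrix (k.castAdd 2).succAbove id =
      of ![P (k.succAbove 0), P (k.succAbove 1), a, b] := by
    ext r c
    fin_cases k <;> fin_cases r <;> rfl
  have erase_three : A.submatrix (Fin.succAbove 3) id = of ![P 0, P 1, P 2, b] := by
    ext r c
    fin_cases r <;> rfl
  have erase_four : A.submatrix (Fin.succAbove 4) id = of ![P 0, P 1, P 2, a] := by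
    ext r c
    fin_cases r <;> rfl
  have mulVec_of_lt (k : Fin 3) : (A *ᵥ x) (k.castAdd 2) = (P *ᵥ x) k := by
    fin_cases k <;> rfl
  have laplace : ∑ k : Fin 3, (-1) ^ (k : ℕ) * (A *ᵥ x) (k.castAdd 2) *
        (A.submatrix (k.castAdd 2).succAbove id).det +
      (-1) ^ 3 * (a ⬝ᵥ x) * (A.submatrix (Fin.succAbove 3) id).det +
      (-1) ^ 4 * (b ⬝ᵥ x) * (A.submatrix (Fin.succAbove 4) id).det = 0 := by
    rw [← sum_mulVec_mul_det_submatrix_succAbove A x, Fin.sum_univ_castSucc (n := 4),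
      Fin.sum_univ_castSucc (n := 3)]
    rfl
  simp only [mulVec_of_lt, erase_of_lt, erase_three, erase_four] at laplace
  linear_combination laplace

/-- The matrix `[v]ₓ` of the cross product `w ↦ v ⨯₃ w`. -/
def crossMatrix (v : Fin 3 → K) : Matrix (Fin 3) (Fin 3) K :=
  LinearMap.toMatrix' (crossProduct v)

theorem crossMatrix_mulVec (v w : Fin 3 → K) : crossMatrix v *ᵥ w = v ⨯₃ w :=
  LinearMap.toMatrix'_mulVec _ _

theorem transpose_crossMatrix (v : Fin 3 → K) : (crossMatrix v)ᵀ = -crossMatrix v := by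
  ext i j
  fin_cases i <;> fin_cases j <;> simp [crossMatrix, LinearMap.toMatrix'_apply, cross_apply]

/-- The epipole of the camera pair `(P, Q)`: the image under `Q` of the center of `P`, the vector of
signed maximal minors of `P`, which spans `ker P` when `P` has rank 3 over a field. Its `i`-th
coordinate is encoded as the determinant of `P` bordered below by the `i`-th row of `Q`. -/
def epipole (P Q : Matrix (Fin 3) (Fin 4) K) : Fin 3 → K :=
  fun i => (of ![P 0, P 1, P 2, Q i]).det

theorem fund_apply (P Q : Matrix (Fin 3) (Fin 4) K) (h k : Fin 3) :
    fund P Q h k = (-1) ^ (h + k : ℕ) *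
      (of ![P (k.succAbove 0), P (k.succAbove 1), Q (h.succAbove 0), Q (h.succAbove 1)]).det := by
  rw [fund, of_apply]
  congr 2
  ext r c
  fin_cases r <;> rfl

theorem fund_mulVec_mulVec_apply (P Q : Matrix (Fin 3) (Fin 4) K) (x : Fin 4 → K) (h : Fin 3) :
    (fund P Q *ᵥ (P *ᵥ x)) h = (-1) ^ (h : ℕ) *
      ((Q *ᵥ x) (h.succAbove 0) * epipole P Q (h.succAbove 1) -
        (Q *ᵥ x) (h.succAbove 1) * epipole P Q (h.succAbove 0)) := by
  have factor_sign : (fund P Q *ᵥ (P *ᵥ x)) h =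
      (-1) ^ (h : ℕ) * ∑ k : Fin 3, (-1) ^ (k : ℕ) * (P *ᵥ x) k *
        (of ![P (k.succAbove 0), P (k.succAbove 1), Q (h.succAbove 0), Q (h.succAbove 1)]).det := by
    rw [mulVec, dotProduct, Finset.mul_sum]
    refine Finset.sum_congr rfl fun k _ => ?_
    rw [fund_apply]
    ring
  rw [factor_sign, sum_mulVec_mul_det_erase_row]
  rfl

theorem fund_mulVec_mulVec (P Q : Matrix (Fin 3) (Fin 4) K) (x : Fin 4 → K) :
    fund P Q *ᵥ (P *ᵥ x) = -(epipole P Q ⨯₃ (Q *ᵥ x)) := by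
  rw [cross_anticomm, cross_apply]
  ext h
  rw [fund_mulVec_mulVec_apply]
  fin_cases h <;> simp [Fin.succAbove]

theorem fund_mul_eq_neg_crossMatrix_mul (P Q : Matrix (Fin 3) (Fin 4) K) :
    fund P Q * P = -(crossMatrix (epipole P Q) * Q) := by
  refine ext_iff_mulVec.mpr fun x => ?_
  rw [neg_mulVec, ← mulVec_mulVec, ← mulVec_mulVec, crossMatrix_mulVec, fund_mulVec_mulVec]

theorem fund_skew_general (P Q : Matrix (Fin 3) (Fin 4) K) :
    Qᵀ * fund P Q * P + Pᵀ * (fund P Q)ᵀ * Q = 0 := by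
  have transpose_term : Pᵀ * (fund P Q)ᵀ = Qᵀ * crossMatrix (epipole P Q) := by
    rw [← transpose_mul, fund_mul_eq_neg_crossMatrix_mul, transpose_neg, transpose_mul,
      transpose_crossMatrix, Matrix.mul_neg, neg_neg]
  rw [transpose_term, Matrix.mul_assoc, fund_mul_eq_neg_crossMatrix_mul, Matrix.mul_neg,
    Matrix.mul_assoc, neg_add_cancel]

/-- `S := Pⱼᵀ 𝓕(Pᵢ, Pⱼ) Pᵢ` is skew-symmetric, i.e.
`Pⱼᵀ 𝓕(Pᵢ, Pⱼ) Pᵢ + Pᵢᵀ 𝓕(Pᵢ, Pⱼ)ᵀ Pⱼ = 0`. -/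
theorem fund_skew (Pi Pj : Matrix (Fin 3) (Fin 4) ℝ) :
    Pjᵀ * fund Pi Pj * Pi + Piᵀ * (fund Pi Pj)ᵀ * Pj = 0 :=
  fund_skew_general Pi Pj
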